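/- For every N ∈ ℕ, the map (f, g) ↦ sup_{|x| ≤ N} ‖f(x) − g(x)‖_0 from (𝒞_0 × 𝒞_0, 𝒞 ⊗ 𝒞) to [0,∞] is measurable. Consequently, the map d_0^{lu}: (𝒞_0 × 𝒞_0, 𝒞 ⊗ 𝒞) → ℝ, d_0^{lu}(f,g) = Σ_{N=1}^∞ 2^{−N} a_N/(1+a_N) with a_N = sup_{|x|≤N} ‖f(x)−g(x)‖_0, is measurable. -/

import Mathlib

open MeasureTheory Filter Set Topology
open scoped ENNReal

noncomputable section

/-- The time interval `[0, T]` as a type. -/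
abbrev Icc0 (T : ℝ) : Type := ↥(Set.Icc (0 : ℝ) T)

/-- A function on `[0, T]` is càdlàg if it is right-continuous and has left limits. -/
def IsCadlag {E : Type*} [TopologicalSpace E] {T : ℝ} (f : Icc0 T → E) : Prop :=
  (∀ t, Tendsto f (nhdsWithin t (Set.Ioi t)) (nhds (f t))) ∧
    (∀ t, ∃ L, Tendsto f (nhdsWithin t (Set.Iio t)) (nhds L))

/-- `𝒟₀`: the space of càdlàg functions from `[0, T]` to `ℝ^d`. -/
def D0 (T : ℝ) (d : ℕ) : Type :=
  {f : Icc0 T → EuclideanSpace ℝ (Fin d) // IsCadlag f}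

/-- The uniform distance `‖x − y‖₀` on `𝒟₀`. -/
noncomputable def unifDist {T : ℝ} {d : ℕ} (f g : D0 T d) : ℝ :=
  ⨆ t : Icc0 T, dist (f.1 t) (g.1 t)

/-- `𝒟`: the σ-algebra on `𝒟₀` generated by the evaluation maps. -/
def Dsigma (T : ℝ) (d : ℕ) : MeasurableSpace (D0 T d) :=
  ⨆ t : Icc0 T, MeasurableSpace.comap (fun f => f.1 t) inferInstance

/-- Continuity of a map `ℝ^d → (𝒟₀, ‖·‖₀)`. -/
def ContinuousInD0 {T : ℝ} {d : ℕ} (F : EuclideanSpace ℝ (Fin d) → D0 T d) : Prop :=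
  ∀ x, ∀ ε > (0 : ℝ), ∃ δ > (0 : ℝ), ∀ y, dist x y < δ → unifDist (F x) (F y) < ε

/-- `𝒞₀ = C(ℝ^d; 𝒟₀)`. -/
def C0 (T : ℝ) (d : ℕ) : Type :=
  {F : EuclideanSpace ℝ (Fin d) → D0 T d // ContinuousInD0 F}

/-- `𝒞`: the σ-algebra on `𝒞₀` generated by the projections `π_x`. -/
def Csigma (T : ℝ) (d : ℕ) : MeasurableSpace (C0 T d) :=
  ⨆ x : EuclideanSpace ℝ (Fin d), MeasurableSpace.comap (fun F => F.1 x) (Dsigma T d)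

/-- `sup_{|x| ≤ N} ‖F(x) − G(x)‖₀` (real-valued). -/
noncomputable def supBall {T : ℝ} {d : ℕ} (N : ℝ) (F G : C0 T d) : ℝ :=
  ⨆ x : {x : EuclideanSpace ℝ (Fin d) // ‖x‖ ≤ N}, unifDist (F.1 x.1) (G.1 x.1)

/-- The metric `d₀ˡᵘ` on `𝒞₀`. -/
noncomputable def d0lu {T : ℝ} {d : ℕ} (F G : C0 T d) : ℝ :=
  ∑' N : ℕ, (1 / 2 : ℝ) ^ (N + 1) *
    (supBall ((N + 1 : ℕ) : ℝ) F G / (1 + supBall ((N + 1 : ℕ) : ℝ) F G))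

theorem IsCadlag.isBounded_range {E : Type*} [PseudoMetricSpace E] {T : ℝ} {f : Icc0 T → E}
    (hf : IsCadlag f) : Bornology.IsBounded (Set.range f) := by
  rw [← Set.image_univ]
  refine isCompact_univ.induction_on (p := fun s => Bornology.IsBounded (Set.image f s)) ?_ ?_ ?_ ?_
  · simp
  · intro s t hst ht
    exact ht.subset (Set.image_mono hst)
  · intro s t hs ht
    rw [Set.image_union]
    exact hs.union ht
  · intro t _
    rw [nhdsWithin_univ]
    obtain ⟨L, hL⟩ := hf.2 t
    have h1 := hL (Metric.ball_mem_nhds L one_pos)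
    have h2 := hf.1 t (Metric.ball_mem_nhds (f t) one_pos)
    refine ⟨(f ⁻¹' Metric.ball L 1) ∪ (f ⁻¹' Metric.ball (f t) 1), ?_, ?_⟩
    · rw [← nhdsLT_sup_nhdsGE, ← Set.Ioi_insert, nhdsWithin_insert]
      refine ⟨Filter.mem_of_superset h1 Set.subset_union_left, ?_,
        Filter.mem_of_superset h2 Set.subset_union_right⟩
      right
      simp
    · rw [Set.image_union]
      exact (Metric.isBounded_ball.subset (Set.image_preimage_subset _ _)).union
        (Metric.isBounded_ball.subset (Set.image_preimage_subset _ _))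

theorem D0.bddAbove {T : ℝ} {d : ℕ} (f g : D0 T d) :
    BddAbove (Set.range fun t : Icc0 T => dist (f.1 t) (g.1 t)) := by
  have h := f.2.isBounded_range.union g.2.isBounded_range
  obtain ⟨C, hC⟩ := Metric.isBounded_iff.1 h
  refine ⟨C, ?_⟩
  rintro _ ⟨t, rfl⟩
  exact hC (Or.inl ⟨t, rfl⟩) (Or.inr ⟨t, rfl⟩)

theorem unifDist_nonneg {T : ℝ} {d : ℕ} (f g : D0 T d) : 0 ≤ unifDist f g :=
  Real.iSup_nonneg fun _ => dist_nonneg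

theorem dist_le_unifDist {T : ℝ} {d : ℕ} (f g : D0 T d) (t : Icc0 T) :
    dist (f.1 t) (g.1 t) ≤ unifDist f g := le_ciSup (D0.bddAbove f g) t

theorem ofReal_unifDist {T : ℝ} {d : ℕ} (f g : D0 T d) :
    ENNReal.ofReal (unifDist f g) = ⨆ t : Icc0 T, edist (f.1 t) (g.1 t) := by
  apply le_antisymm
  · apply ENNReal.ofReal_le_of_le_toReal
    have hne : (⨆ t : Icc0 T, edist (f.1 t) (g.1 t)) ≠ ∞ := by
      refine ne_top_of_le_ne_top (ENNReal.ofReal_ne_top (r := unifDist f g)) (iSup_le fun t => ?_)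
      rw [edist_dist]
      exact ENNReal.ofReal_le_ofReal (dist_le_unifDist f g t)
    refine Real.iSup_le (fun t => ?_) ENNReal.toReal_nonneg
    rw [dist_edist]
    exact ENNReal.toReal_mono hne (le_iSup (fun t : Icc0 T => edist (f.1 t) (g.1 t)) t)
  · refine iSup_le fun t => ?_
    rw [edist_dist]
    exact ENNReal.ofReal_le_ofReal (dist_le_unifDist f g t)

theorem C0.continuous_eval {T : ℝ} {d : ℕ} (F : C0 T d) (t : Icc0 T) :
    Continuous fun x => (F.1 x).1 t := by
  rw [Metric.continuous_iff]
  intro x ε hε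
  obtain ⟨δ, hδ, h⟩ := F.2 x ε hε
  refine ⟨δ, hδ, fun y hy => ?_⟩
  rw [dist_comm]
  exact (dist_le_unifDist _ _ t).trans_lt (h y (by rwa [dist_comm]))

/-- A countable set of times that determines suprema of right-continuous functions. -/
theorem exists_countable_times (T : ℝ) : ∃ S : Set (Icc0 T), S.Countable ∧
    ∀ t, t ∉ S → ∃ᶠ s in 𝓝[>] t, s ∈ S := by
  obtain ⟨S, hS, hd⟩ := TopologicalSpace.exists_countable_dense (Icc0 T)
  refine ⟨S ∪ {t | 𝓝[>] t = ⊥}, hS.union countable_setOfPred_isolated_right, fun t ht => ?_⟩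
  have hne : (𝓝[>] t).NeBot := ⟨fun h => ht (Or.inr h)⟩
  rw [Filter.frequently_iff]
  intro U hU
  obtain ⟨V, hVo, htV, hV⟩ := mem_nhdsWithin.1 hU
  have hne2 : (V ∩ Set.Ioi t).Nonempty :=
    hne.nonempty_of_mem (mem_nhdsWithin.2 ⟨V, hVo, htV, subset_rfl⟩)
  obtain ⟨s, hs, hsS⟩ := hd.inter_open_nonempty _ (hVo.inter isOpen_Ioi) hne2
  exact ⟨s, hV hs, Or.inl hsS⟩

theorem iSup_edist_eq {T : ℝ} {d : ℕ} (f g : D0 T d) {S : Set (Icc0 T)}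
    (hS : ∀ t, t ∉ S → ∃ᶠ s in 𝓝[>] t, s ∈ S) :
    ⨆ t : Icc0 T, edist (f.1 t) (g.1 t) = ⨆ t ∈ S, edist (f.1 t) (g.1 t) := by
  apply le_antisymm
  · refine iSup_le fun t => ?_
    by_cases ht : t ∈ S
    · exact le_iSup₂ (f := fun t (_ : t ∈ S) => edist (f.1 t) (g.1 t)) t ht
    · have h := (f.2.1 t).edist (g.2.1 t)
      refine le_of_tendsto_of_frequently h ((hS t ht).mono fun s hs => ?_)
      exact le_iSup₂ (f := fun t (_ : t ∈ S) => edist (f.1 t) (g.1 t)) s hs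
  · exact iSup₂_le fun t _ => le_iSup (fun t => edist (f.1 t) (g.1 t)) t

theorem Csigma_eval (T : ℝ) (d : ℕ) (x : EuclideanSpace ℝ (Fin d)) (t : Icc0 T) :
    @Measurable _ _ (Csigma T d) inferInstance (fun F : C0 T d => (F.1 x).1 t) := by
  have h1 : @Measurable _ _ (Dsigma T d) inferInstance (fun f : D0 T d => f.1 t) :=
    Measurable.of_comap_le (le_iSup (fun t : Icc0 T =>
      MeasurableSpace.comap (fun f : D0 T d => f.1 t) inferInstance) t)
  have h2 : @Measurable _ _ (Csigma T d) (Dsigma T d) (fun F : C0 T d => F.1 x) :=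
    @Measurable.of_comap_le _ _ (Csigma T d) (Dsigma T d) _ (le_iSup (fun x =>
      MeasurableSpace.comap (fun F : C0 T d => F.1 x) (Dsigma T d)) x)
  exact @Measurable.comp _ _ _ (Csigma T d) (Dsigma T d) _ _ _ h1 h2

theorem measurable_ballSup (T : ℝ) (d : ℕ) (N : ℕ) :
    @Measurable (C0 T d × C0 T d) ℝ≥0∞ ((Csigma T d).prod (Csigma T d)) inferInstance
        (fun p => ⨆ x : {x : EuclideanSpace ℝ (Fin d) // ‖x‖ ≤ (N : ℝ)},
          ENNReal.ofReal (unifDist (p.1.1 x.1) (p.2.1 x.1))) := by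
  letI : MeasurableSpace (C0 T d) := Csigma T d
  obtain ⟨S, hSc, hS⟩ := exists_countable_times T
  obtain ⟨X, hXc, hX⟩ := TopologicalSpace.exists_countable_dense
    {x : EuclideanSpace ℝ (Fin d) // ‖x‖ ≤ (N : ℝ)}
  have key : (fun p : C0 T d × C0 T d =>
        ⨆ x : {x : EuclideanSpace ℝ (Fin d) // ‖x‖ ≤ (N : ℝ)},
          ENNReal.ofReal (unifDist (p.1.1 x.1) (p.2.1 x.1))) =
      fun p => ⨆ x ∈ X, ⨆ t ∈ S, edist ((p.1.1 x.1).1 t) ((p.2.1 x.1).1 t) := by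
    funext p
    simp_rw [ofReal_unifDist, iSup_edist_eq _ _ hS]
    apply le_antisymm
    · refine iSup_le fun x => iSup₂_le fun t ht => ?_
      have hcl : IsClosed {x : {x : EuclideanSpace ℝ (Fin d) // ‖x‖ ≤ (N : ℝ)} |
          edist ((p.1.1 x.1).1 t) ((p.2.1 x.1).1 t) ≤
            ⨆ x ∈ X, ⨆ t ∈ S, edist ((p.1.1 x.1).1 t) ((p.2.1 x.1).1 t)} :=
        isClosed_le (((p.1.continuous_eval t).comp continuous_subtype_val).edist
          ((p.2.continuous_eval t).comp continuous_subtype_val)) continuous_const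
      have hsub := hcl.closure_subset_iff.2 (fun x (hx : x ∈ X) =>
        le_iSup₂_of_le (f := fun x (_ : x ∈ X) =>
          ⨆ t ∈ S, edist ((p.1.1 x.1).1 t) ((p.2.1 x.1).1 t)) x hx
          (le_iSup₂ (f := fun t (_ : t ∈ S) =>
            edist ((p.1.1 x.1).1 t) ((p.2.1 x.1).1 t)) t ht))
      exact hsub (hX x)
    · exact iSup₂_le fun x _ => le_iSup (fun x :
        {x : EuclideanSpace ℝ (Fin d) // ‖x‖ ≤ (N : ℝ)} =>
          ⨆ t ∈ S, edist ((p.1.1 x.1).1 t) ((p.2.1 x.1).1 t)) x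
  have hm : Measurable (fun p : C0 T d × C0 T d =>
      ⨆ x ∈ X, ⨆ t ∈ S, edist ((p.1.1 x.1).1 t) ((p.2.1 x.1).1 t)) := by
    refine Measurable.biSup X hXc fun x _ => Measurable.biSup S hSc fun t _ => ?_
    exact ((Csigma_eval T d x.1 t).comp measurable_fst).edist
      ((Csigma_eval T d x.1 t).comp measurable_snd)
  rw [key]
  exact hm

theorem supBall_eq {T : ℝ} {d : ℕ} (N : ℝ) (F G : C0 T d) :
    supBall N F G = (⨆ x : {x : EuclideanSpace ℝ (Fin d) // ‖x‖ ≤ N},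
          ENNReal.ofReal (unifDist (F.1 x.1) (G.1 x.1))).toReal := by
  rw [ENNReal.toReal_iSup (fun _ => ENNReal.ofReal_ne_top)]
  simp_rw [ENNReal.toReal_ofReal (unifDist_nonneg _ _)]
  rfl

theorem supBall_nonneg {T : ℝ} {d : ℕ} (N : ℝ) (F G : C0 T d) : 0 ≤ supBall N F G :=
  Real.iSup_nonneg fun _ => unifDist_nonneg _ _

/-- **Lemma (measurability of the ball suprema and of `d₀ˡᵘ` w.r.t. `𝒞 ⊗ 𝒞`).**
For every `N`, the map `(f,g) ↦ sup_{|x|≤N} ‖f(x) − g(x)‖₀ ∈ [0,∞]` is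
`𝒞 ⊗ 𝒞`-measurable; consequently `d₀ˡᵘ : 𝒞₀ × 𝒞₀ → ℝ` is `𝒞 ⊗ 𝒞`-measurable. -/
theorem d0lu_measurable (T : ℝ) (d : ℕ) :
    (∀ N : ℕ,
      @Measurable (C0 T d × C0 T d) ℝ≥0∞ ((Csigma T d).prod (Csigma T d)) inferInstance
        (fun p => ⨆ x : {x : EuclideanSpace ℝ (Fin d) // ‖x‖ ≤ (N : ℝ)},
          ENNReal.ofReal (unifDist (p.1.1 x.1) (p.2.1 x.1)))) ∧
    @Measurable (C0 T d × C0 T d) ℝ ((Csigma T d).prod (Csigma T d)) inferInstance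
      (fun p => d0lu p.1 p.2) := by
  refine ⟨measurable_ballSup T d, ?_⟩
  letI : MeasurableSpace (C0 T d) := Csigma T d
  have hsb : ∀ N : ℕ, Measurable (fun p : C0 T d × C0 T d => supBall (N : ℝ) p.1 p.2) := by
    intro N
    simp_rw [supBall_eq]
    exact (measurable_ballSup T d N).ennreal_toReal
  have hsum : ∀ p : C0 T d × C0 T d, Summable fun N : ℕ => (1 / 2 : ℝ) ^ (N + 1) *
      (supBall ((N + 1 : ℕ) : ℝ) p.1 p.2 / (1 + supBall ((N + 1 : ℕ) : ℝ) p.1 p.2)) := by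
    intro p
    have hg : Summable fun N : ℕ => (1 / 2 : ℝ) ^ (N + 1) :=
      (summable_nat_add_iff 1).2 summable_geometric_two
    refine Summable.of_nonneg_of_le (fun N => ?_) (fun N => ?_) hg
    · have := supBall_nonneg ((N + 1 : ℕ) : ℝ) p.1 p.2
      positivity
    · have := supBall_nonneg ((N + 1 : ℕ) : ℝ) p.1 p.2
      refine mul_le_of_le_one_right (by positivity) ?_
      rw [div_le_one (by positivity)]
      linarith
  have hm : Measurable (fun p : C0 T d × C0 T d => d0lu p.1 p.2) := by
    refine measurable_of_tendsto_metrizable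
      (f := fun n (p : C0 T d × C0 T d) => ∑ N ∈ Finset.range n, (1 / 2 : ℝ) ^ (N + 1) *
        (supBall ((N + 1 : ℕ) : ℝ) p.1 p.2 / (1 + supBall ((N + 1 : ℕ) : ℝ) p.1 p.2)))
      (fun n => ?_) (tendsto_pi_nhds.2 fun p => (hsum p).hasSum.tendsto_sum_nat)
    refine Finset.measurable_fun_sum _ fun N _ => ?_
    exact measurable_const.mul ((hsb (N + 1)).div (measurable_const.add (hsb (N + 1))))
  exact hm

end
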